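/- arXiv:1712.07742 — 8 statements merged into one kernel-verified Lean document; each statement's English description precedes it below -/
import Mathlib

section
/- If the penalty price satisfies π^p ≥ 0, then q = b is the unique minimizer over q ∈ [0, ∞) of the not-selected cost J_ns(q, b) = π^e·q − u(q) + π^p·(b − q)^+, and the minimum value equals −(π − π^e)·b. -/
/-!
The cost is piecewise affine in `q` with a single kink at `b`: its slope is `πe - π - πp < 0` on the
left of `b` and `πe > 0` on the right, so `b` is the unique minimizer. Each case below is the
positivity of the excess cost over the value at `b`.
-/

/-- The agent's (discretionary) utility function: `u(q) = π·q` for `q < b` and `π·b` for `q ≥ b`. -/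
noncomputable def agentUtility (b π q : ℝ) : ℝ := if q < b then π * q else π * b

/-- The not-selected second-stage cost: `J_ns(q,f) = πᵉ·q − u(q) + πᵖ·(f − q)⁺`. -/
noncomputable def Jns (b π πe πp f q : ℝ) : ℝ :=
  πe * q - agentUtility b π q + πp * max (f - q) 0

/-- If the penalty price satisfies `πᵖ ≥ 0`, then `q = b` is the unique minimizer over
`q ∈ [0, ∞)` of the not-selected cost with truthful report `f = b`, and the minimum value
equals `−(π − πᵉ)·b`. -/
theorem stmt0 (b π πe πp : ℝ) (hb : 0 < b) (hπ : πe < π) (hπe : 0 < πe)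
    (hπp : 0 ≤ πp) :
    Jns b π πe πp b b = -(π - πe) * b ∧
    ∀ q : ℝ, 0 ≤ q → q ≠ b → Jns b π πe πp b b < Jns b π πe πp b q := by
  have key : Jns b π πe πp b b = -(π - πe) * b := by
    simp [Jns, agentUtility]
    ring
  refine ⟨key, fun q _ hq => ?_⟩
  rw [key]
  unfold Jns agentUtility
  rcases lt_or_gt_of_ne hq with h | h
  -- Below `b` the excess cost is `(π - πe + πp) * (b - q)`.
  · rw [if_pos h, max_eq_left (by linarith)]
    nlinarith [mul_pos (sub_pos.2 hπ) (sub_pos.2 h), mul_nonneg hπp (sub_pos.2 h).le]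
  -- Above `b` the excess cost is `πe * (q - b)`.
  · rw [if_neg (not_lt.2 h.le), max_eq_right (by linarith)]
    nlinarith [mul_pos hπe (sub_pos.2 h)]
end

section
/- If the reward price satisfies π^r > π − π^e, then q = 0 is the unique minimizer over q ∈ [0, ∞) of the selected cost J_s(q, b) = π^e·q − u(q) − π^r·(b − q)^+, and the minimum value equals −π^r·b. -/
/-- The selected second-stage cost: `J_s(q,f) = πᵉ·q − u(q) − πʳ·(f − q)⁺`. -/
noncomputable def Jsel (b π πe πr f q : ℝ) : ℝ :=
  πe * q - agentUtility b π q - πr * max (f - q) 0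

/-- If the reward price satisfies `πʳ > π − πᵉ`, then `q = 0` is the unique minimizer over
`q ∈ [0, ∞)` of the selected cost with truthful report `f = b`, and the minimum value
equals `−πʳ·b`. -/
theorem stmt1 (b π πe πr : ℝ) (hb : 0 < b) (hπ : πe < π) (hπe : 0 < πe)
    (hπr : π - πe < πr) :
    Jsel b π πe πr b 0 = -πr * b ∧
    ∀ q : ℝ, 0 ≤ q → q ≠ 0 → Jsel b π πe πr b 0 < Jsel b π πe πr b q := by
  have h0 : Jsel b π πe πr b 0 = -πr * b := by
    simp [Jsel, agentUtility, hb, hb.le]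
  refine ⟨h0, fun q hq hq0 => ?_⟩
  have hq_pos : 0 < q := lt_of_le_of_ne hq (Ne.symm hq0)
  rw [h0]
  unfold Jsel agentUtility
  by_cases hqb : q < b
  · rw [if_pos hqb, max_eq_left (by linarith)]
    -- The cost exceeds `-πr * b` by `(πe - π + πr) * q`.
    nlinarith [mul_pos (sub_pos.2 hπr) hq_pos]
  · have hbq : b ≤ q := not_lt.1 hqb
    rw [if_neg hqb, max_eq_right (by linarith)]
    -- The excess is `πe * (q - b) + (πe - π + πr) * b`.
    nlinarith [mul_pos (sub_pos.2 hπr) hb, mul_nonneg hπe.le (sub_nonneg.2 hbq)]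
end

section
/- If the reward price satisfies 0 ≤ π^r < π − π^e, then q = b is the unique minimizer over q ∈ [0, ∞) of the selected cost J_s(q, b) = π^e·q − u(q) − π^r·(b − q)^+; that is, a selected agent facing too low a reward price yields none of its discretionary consumption. -/
/-- If the reward price satisfies `0 ≤ πʳ < π − πᵉ`, then `q = b` is the unique minimizer over
`q ∈ [0, ∞)` of the selected cost with truthful report `f = b`: a selected agent facing too low
a reward price yields none of its discretionary consumption. -/
theorem stmt2 (b π πe πr : ℝ) (hb : 0 < b) (hπ : πe < π) (hπe : 0 < πe)
    (hπr0 : 0 ≤ πr) (hπr : πr < π - πe) :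
    ∀ q : ℝ, 0 ≤ q → q ≠ b → Jsel b π πe πr b b < Jsel b π πe πr b q := by
  intro q _ hqb
  rcases lt_or_gt_of_ne hqb with h | h
  -- Below `b`, the gap to the cost at `b` is `(π - πe - πr) * (b - q)`.
  · have gap_pos : 0 < (π - πe - πr) * (b - q) :=
      mul_pos (by linarith) (by linarith)
    simp only [Jsel, agentUtility, lt_irrefl, if_false, if_pos h, sub_self, max_self,
      max_eq_left (sub_nonneg.2 h.le)]
    linarith
  -- Above `b`, utility and reward are constant, so the gap is `πe * (q - b)`.
  · have gap_pos : 0 < πe * (q - b) := mul_pos hπe (by linarith)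
    simp only [Jsel, agentUtility, lt_irrefl, if_false, if_neg h.not_gt, sub_self, max_self,
      max_eq_right (sub_nonpos.2 h.le)]
    linarith
end

section
/- If the penalty price satisfies π^p ≥ π^e, then for every reported baseline f ≥ 0 the optimal second-stage cost of a not-selected agent equals inf over q ∈ [0, ∞) of J_ns(q, f) = π^e·q − u(q) + π^p·(f − q)^+, and this infimum equals (π^e − π)·b + π^e·(f − b)^+; moreover the infimum is attained at q = b when f ≤ b and at q = b when f > b. -/
/-- Below `b` the marginal utility `π` exceeds the price, so raising `q` to `b` lowers the cost and
does not raise the penalty. Above `b` utility is flat, and buying any remaining shortfall `f - q`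
costs `πᵉ` per unit while saving a penalty of `πᵖ ≥ πᵉ` per unit. -/
lemma le_Jns {b π πe πp : ℝ} (hπ : πe < π) (hπe : 0 < πe) (hπp : πe ≤ πp) (f q : ℝ) :
    (πe - π) * b + πe * max (f - b) 0 ≤ Jns b π πe πp f q := by
  have penalty : πe * max (f - q) 0 ≤ πp * max (f - q) 0 :=
    mul_le_mul_of_nonneg_right hπp (le_max_right _ _)
  unfold Jns agentUtility
  split_ifs with hq
  · have shortfall : πe * max (f - b) 0 ≤ πe * max (f - q) 0 :=
      mul_le_mul_of_nonneg_left (max_le_max (by linarith) le_rfl) hπe.le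
    nlinarith [mul_pos (sub_pos.2 hπ) (sub_pos.2 hq)]
  · have split : max (f - b) 0 ≤ (q - b) + max (f - q) 0 :=
      max_le (by linarith [le_max_left (f - q) 0]) (by linarith [le_max_right (f - q) 0])
    nlinarith [mul_le_mul_of_nonneg_left split hπe.le]

/-- If the penalty price satisfies `πᵖ ≥ πᵉ`, then for every reported baseline `f ≥ 0` the
optimal second-stage cost of a not-selected agent, i.e. the infimum over `q ∈ [0, ∞)` of
`J_ns(q, f)`, equals `(πᵉ − π)·b + πᵉ·(f − b)⁺`; moreover the infimum is attained at `q = b`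
when `f ≤ b`, and at `q = f` when `f > b`. -/
theorem stmt3 (b π πe πp : ℝ) (hb : 0 < b) (hπ : πe < π) (hπe : 0 < πe)
    (hπp : πe ≤ πp) :
    ∀ f : ℝ, 0 ≤ f →
      sInf ((fun q => Jns b π πe πp f q) '' Set.Ici 0) =
        (πe - π) * b + πe * max (f - b) 0 ∧
      (f ≤ b → Jns b π πe πp f b = (πe - π) * b + πe * max (f - b) 0) ∧
      (b < f → Jns b π πe πp f f = (πe - π) * b + πe * max (f - b) 0) := by
  intro f hf
  have at_b : f ≤ b → Jns b π πe πp f b = (πe - π) * b + πe * max (f - b) 0 := by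
    intro h
    simp only [Jns, agentUtility, lt_irrefl, if_false, max_eq_right (sub_nonpos.2 h)]
    ring
  have at_f : b < f → Jns b π πe πp f f = (πe - π) * b + πe * max (f - b) 0 := by
    intro h
    simp only [Jns, agentUtility, if_neg h.not_gt, sub_self, max_self,
      max_eq_left (sub_pos.2 h).le]
    ring
  refine ⟨IsLeast.csInf_eq ⟨?_, ?_⟩, at_b, at_f⟩
  · rcases le_or_gt f b with h | h
    · exact ⟨b, hb.le, at_b h⟩
    · exact ⟨f, hf, at_f h⟩
  · rintro _ ⟨q, _, rfl⟩
    exact le_Jns hπ hπe hπp f q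
end

section
/- For any reward price π^r ≥ 0 and any reported baseline f ≥ 0, the optimal second-stage cost of a selected agent equals inf over q ∈ [0, ∞) of J_s(q, f) = π^e·q − u(q) − π^r·(f − q)^+, and this infimum equals min{ −π^r·f , (π^e − π)·b − π^r·(f − b)^+ }; moreover the infimum is attained at q = 0 or at q = b. -/
theorem Jsel_zero {b f : ℝ} (π πe πr : ℝ) (hb : 0 < b) (hf : 0 ≤ f) :
    Jsel b π πe πr f 0 = -πr * f := by
  simp [Jsel, agentUtility, hb, hf]

theorem Jsel_at_baseline (b π πe πr f : ℝ) :
    Jsel b π πe πr f b = (πe - π) * b - πr * max (f - b) 0 := by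
  simp only [Jsel, agentUtility, lt_irrefl, if_false]
  ring

/-- Concavity of the cost on `[0, b]`, in the form of a chord inequality scaled by `b`. -/
theorem Jsel_chord_le {b π πe πr f q : ℝ} (hπr : 0 ≤ πr) (hf : 0 ≤ f) (hq : 0 ≤ q) (hqb : q < b) :
    (b - q) * (-πr * f) + q * ((πe - π) * b - πr * max (f - b) 0) ≤
      b * Jsel b π πe πr f q := by
  have hconv : b * max (f - q) 0 ≤ (b - q) * f + q * max (f - b) 0 := by
    have h1 : q * (f - b) ≤ q * max (f - b) 0 :=
      mul_le_mul_of_nonneg_left (le_max_left _ _) hq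
    have h2 : 0 ≤ q * max (f - b) 0 := mul_nonneg hq (le_max_right _ _)
    have h3 : 0 ≤ (b - q) * f := mul_nonneg (by linarith) hf
    rcases max_cases (f - q) 0 with ⟨h, _⟩ | ⟨h, _⟩ <;> rw [h] <;> linarith
  have := mul_le_mul_of_nonneg_left hconv hπr
  simp only [Jsel, agentUtility, if_pos hqb]
  linarith

theorem Jsel_at_baseline_le {b π πe πr f q : ℝ} (hπe : 0 < πe) (hπr : 0 ≤ πr) (hbq : b ≤ q) :
    (πe - π) * b - πr * max (f - b) 0 ≤ Jsel b π πe πr f q := by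
  have h1 : πr * max (f - q) 0 ≤ πr * max (f - b) 0 := by gcongr
  have h2 : πe * b ≤ πe * q := by gcongr
  simp only [Jsel, agentUtility, if_neg hbq.not_gt]
  linarith

/-- For any reward price `πʳ ≥ 0` and any reported baseline `f ≥ 0`, the optimal second-stage
cost of a selected agent, i.e. the infimum over `q ∈ [0, ∞)` of `J_s(q, f)`, equals
`min{ −πʳ·f , (πᵉ − π)·b − πʳ·(f − b)⁺ }`; moreover the infimum is attained at `q = 0` or at
`q = b`. -/
theorem stmt4 (b π πe πr : ℝ) (hb : 0 < b) (hπ : πe < π) (hπe : 0 < πe)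
    (hπr : 0 ≤ πr) :
    ∀ f : ℝ, 0 ≤ f →
      sInf ((fun q => Jsel b π πe πr f q) '' Set.Ici 0) =
        min (-πr * f) ((πe - π) * b - πr * max (f - b) 0) ∧
      (Jsel b π πe πr f 0 = min (-πr * f) ((πe - π) * b - πr * max (f - b) 0) ∨
       Jsel b π πe πr f b = min (-πr * f) ((πe - π) * b - πr * max (f - b) 0)) := by
  intro f hf
  have hatt : Jsel b π πe πr f 0 = min (-πr * f) ((πe - π) * b - πr * max (f - b) 0) ∨
      Jsel b π πe πr f b = min (-πr * f) ((πe - π) * b - πr * max (f - b) 0) := by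
    rw [Jsel_zero π πe πr hb hf, Jsel_at_baseline]
    exact (min_choice _ _).imp Eq.symm Eq.symm
  refine ⟨IsLeast.csInf_eq ⟨?_, ?_⟩, hatt⟩
  · rcases hatt with h | h
    · exact ⟨0, Set.mem_Ici.2 le_rfl, h⟩
    · exact ⟨b, Set.mem_Ici.2 hb.le, h⟩
  · rintro _ ⟨q, hq, rfl⟩
    have hq0 : 0 ≤ q := hq
    rcases lt_or_ge q b with hqb | hbq
    · refine le_of_mul_le_mul_left (le_trans ?_ (Jsel_chord_le hπr hf hq0 hqb)) hb
      have h1 := mul_le_mul_of_nonneg_left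
        (min_le_left (-πr * f) ((πe - π) * b - πr * max (f - b) 0)) (sub_nonneg.2 hqb.le)
      have h2 := mul_le_mul_of_nonneg_left
        (min_le_right (-πr * f) ((πe - π) * b - πr * max (f - b) 0)) hq0
      linarith
    · exact (min_le_right _ _).trans (Jsel_at_baseline_le hπe hπr hbq)
end

section
/- Suppose the penalty price satisfies π^p ≥ π^e, the reward price satisfies π^r ≥ 0, and the selection probability satisfies 0 ≤ α ≤ π^e/(π^r + π^e). Then truthful reporting minimizes the agent's expected first-stage cost: J(b) ≤ J(f) for every reported baseline f ≥ 0, where J(f) = α·(inf over q ∈ [0,∞) of J_s(q, f)) + (1 − α)·(inf over q ∈ [0,∞) of J_ns(q, f)). -/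
/-- The expected first-stage cost of reporting baseline `f`:
`J(f) = α·(inf_{q ≥ 0} J_s(q,f)) + (1 − α)·(inf_{q ≥ 0} J_ns(q,f))`. -/
noncomputable def Jexp (b π πe πp πr α f : ℝ) : ℝ :=
  α * sInf ((fun q => Jsel b π πe πr f q) '' Set.Ici 0) +
  (1 - α) * sInf ((fun q => Jns b π πe πp f q) '' Set.Ici 0)

/-- When selected, the agent either consumes nothing or consumes its true baseline. -/
theorem sInf_Jsel (b π πe πr f : ℝ) (hb : 0 < b) (hπe : 0 < πe)
    (hπr : 0 ≤ πr) (hf : 0 ≤ f) :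
    sInf ((fun q => Jsel b π πe πr f q) '' Set.Ici 0) =
      min (-(πr * f)) ((πe - π) * b - πr * max (f - b) 0) := by
  apply IsLeast.csInf_eq
  constructor
  · rcases min_choice (-(πr * f)) ((πe - π) * b - πr * max (f - b) 0) with h | h <;> rw [h]
    · refine ⟨0, Set.mem_Ici.2 le_rfl, ?_⟩
      simp [Jsel, agentUtility, hb, max_eq_left hf]
    · refine ⟨b, hb.le, ?_⟩
      simp only [Jsel, agentUtility, lt_irrefl, if_false]
      ring
  · rintro _ ⟨q, hq, rfl⟩
    have hq0 : 0 ≤ q := hq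
    simp only [Jsel, agentUtility]
    split_ifs with h
    · -- On `[0, b]` the cost is at least the chord bound, whose endpoints are the two values;
      -- the reward term is convex in `q`, hence below its own chord.
      have hconv : b * max (f - q) 0 ≤ (b - q) * f + q * max (f - b) 0 := by
        have h1 := mul_nonneg hq0 (sub_nonneg.2 (le_max_left (f - b) 0))
        have h2 := mul_nonneg hq0 (le_max_right (f - b) 0)
        have h3 := mul_nonneg (sub_nonneg.2 h.le) hf
        rcases max_choice (f - q) 0 with h' | h' <;> rw [h'] <;> nlinarith
      have hr := mul_le_mul_of_nonneg_left hconv hπr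
      have m1 := mul_le_mul_of_nonneg_left
        (min_le_left (-(πr * f)) ((πe - π) * b - πr * max (f - b) 0)) (sub_nonneg.2 h.le)
      have m2 := mul_le_mul_of_nonneg_left
        (min_le_right (-(πr * f)) ((πe - π) * b - πr * max (f - b) 0)) hq0
      refine le_of_mul_le_mul_left ?_ hb
      linarith
    · refine (min_le_right _ _).trans ?_
      have h1 : max (f - q) 0 ≤ max (f - b) 0 := max_le_max (by linarith) le_rfl
      have h2 := mul_le_mul_of_nonneg_left h1 hπr
      have h3 := mul_le_mul_of_nonneg_left (not_lt.1 h) hπe.le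
      linarith

/-- When not selected, consuming `max f b` is optimal. -/
theorem sInf_Jns (b π πe πp f : ℝ) (hb : 0 < b) (hπ : πe < π) (hπe : 0 < πe)
    (hπp : πe ≤ πp) :
    sInf ((fun q => Jns b π πe πp f q) '' Set.Ici 0) = πe * max f b - π * b := by
  apply IsLeast.csInf_eq
  constructor
  · refine ⟨max f b, hb.le.trans (le_max_right _ _), ?_⟩
    simp [Jns, agentUtility]
  · rintro _ ⟨q, hq, rfl⟩
    simp only [Jns, agentUtility]
    have h0 := le_max_right (f - q) 0
    -- The penalty is at least the retail cost of the shortfall.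
    have h1 : πe * max (f - q) 0 ≤ πp * max (f - q) 0 := mul_le_mul_of_nonneg_right hπp h0
    have h2 : πe * (f - q) ≤ πe * max (f - q) 0 :=
      mul_le_mul_of_nonneg_left (le_max_left _ _) hπe.le
    have h3 : 0 ≤ πe * max (f - q) 0 := mul_nonneg hπe.le h0
    split_ifs with h
    · have h4 : 0 ≤ (π - πe) * (b - q) := mul_nonneg (by linarith) (by linarith)
      have h5 : 0 ≤ π * (b - q) := mul_nonneg (by linarith) (by linarith)
      rcases max_choice f b with h' | h' <;> rw [h'] <;> linarith
    · have h4 := mul_le_mul_of_nonneg_left (not_lt.1 h) hπe.le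
      rcases max_choice f b with h' | h' <;> rw [h'] <;> linarith

/-- If the penalty price satisfies `πᵖ ≥ πᵉ`, the reward price satisfies `πʳ ≥ 0`, and the
selection probability satisfies `0 ≤ α ≤ πᵉ/(πʳ + πᵉ)`, then truthful reporting minimizes
the agent's expected first-stage cost: `J(b) ≤ J(f)` for every reported baseline `f ≥ 0`. -/
theorem stmt5 (b π πe πp πr α : ℝ) (hb : 0 < b) (hπ : πe < π) (hπe : 0 < πe)
    (hπp : πe ≤ πp) (hπr : 0 ≤ πr) (hα0 : 0 ≤ α) (hα : α ≤ πe / (πr + πe)) :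
    ∀ f : ℝ, 0 ≤ f → Jexp b π πe πp πr α b ≤ Jexp b π πe πp πr α f := by
  intro f hf
  have hpos : 0 < πr + πe := by linarith
  have hα' : α * (πr + πe) ≤ πe := (le_div_iff₀ hpos).1 hα
  rw [Jexp, Jexp, sInf_Jsel b π πe πr b hb hπe hπr hb.le, sInf_Jsel b π πe πr f hb hπe hπr hf,
    sInf_Jns b π πe πp b hb hπ hπe hπp, sInf_Jns b π πe πp f hb hπ hπe hπp]
  rcases le_total f b with h | h
  · rw [max_eq_right h, max_self, sub_self, max_self, max_eq_right (sub_nonpos.2 h)]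
    have hr := mul_le_mul_of_nonneg_left h hπr
    gcongr
  · rw [max_eq_left h, max_self, sub_self, max_self, max_eq_left (sub_nonneg.2 h)]
    -- Both branches of the selected minimum shift by the same amount.
    have hs : min (-(πr * f)) ((πe - π) * b - πr * (f - b)) =
        min (-(πr * b)) ((πe - π) * b - πr * 0) - πr * (f - b) := by
      rw [← min_sub_sub_right]
      congr 1 <;> ring
    rw [hs]
    have hnet : 0 ≤ (πe - α * (πr + πe)) * (f - b) :=
      mul_nonneg (sub_nonneg.2 hα') (sub_nonneg.2 h)
    linarith
end

section
/- Let 0 < ν_j < ν_{j+1} < ν_{j+2} be reals, let c_j > 0, e > 0 with ν_{j+2} − e·ν_{j+1} > 0, and set c_{j+1} = e·c_j. Fix reals b > 0, π^e > 0 and π_k, and define U_r = (c_r·π^e/ν_{r+1})·(ν_r − π^e)·b + (1 − c_r·π^e/ν_{r+1})·(π_k − π^e)·b for r ∈ {j, j+1}. Then U_{j+1} − U_j = (c_j·π^e·b/(ν_{j+2}·ν_{j+1}))·(π_k·(ν_{j+2} − e·ν_{j+1}) − (ν_j·ν_{j+2} − e·(ν_{j+1})²)); in particular U_{j+1} ≤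 U_j if and only if π_k ≤ (ν_j·ν_{j+2} − e·(ν_{j+1})²)/(ν_{j+2} − e·ν_{j+1}). -/
/-- Adjacent-pod utility comparison in the complete-information SRBM mechanism. With
`0 < ν_j < ν_{j+1} < ν_{j+2}`, `c_j > 0`, `e > 0`, `ν_{j+2} − e·ν_{j+1} > 0`, `c_{j+1} = e·c_j`,
and expected net utilities
`U_r = (c_r·πᵉ/ν_{r+1})·(ν_r − πᵉ)·b + (1 − c_r·πᵉ/ν_{r+1})·(π_k − πᵉ)·b` for `r ∈ {j, j+1}`,
we have
`U_{j+1} − U_j = (c_j·πᵉ·b/(ν_{j+2}·ν_{j+1}))·(π_k·(ν_{j+2} − e·ν_{j+1}) − (ν_j·ν_{j+2} − e·ν_{j+1}²))`;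
in particular `U_{j+1} ≤ U_j ↔ π_k ≤ (ν_j·ν_{j+2} − e·ν_{j+1}²)/(ν_{j+2} − e·ν_{j+1})`. -/
theorem stmt15 (νj νj1 νj2 cj e b πe πk : ℝ)
    (hνj : 0 < νj) (h1 : νj < νj1) (h2 : νj1 < νj2)
    (hcj : 0 < cj) (he : 0 < e) (hden : 0 < νj2 - e * νj1)
    (hb : 0 < b) (hπe : 0 < πe)
    (cj1 : ℝ) (hcj1 : cj1 = e * cj)
    (Uj Uj1 : ℝ)
    (hUj : Uj = cj * πe / νj1 * (νj - πe) * b +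
      (1 - cj * πe / νj1) * (πk - πe) * b)
    (hUj1 : Uj1 = cj1 * πe / νj2 * (νj1 - πe) * b +
      (1 - cj1 * πe / νj2) * (πk - πe) * b) :
    Uj1 - Uj = cj * πe * b / (νj2 * νj1) *
      (πk * (νj2 - e * νj1) - (νj * νj2 - e * νj1 ^ 2)) ∧
    (Uj1 ≤ Uj ↔ πk ≤ (νj * νj2 - e * νj1 ^ 2) / (νj2 - e * νj1)) := by
  have hp1 : 0 < νj1 := hνj.trans h1
  have hp2 : 0 < νj2 := hp1.trans h2
  have key : Uj1 - Uj = cj * πe * b / (νj2 * νj1) *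
      (πk * (νj2 - e * νj1) - (νj * νj2 - e * νj1 ^ 2)) := by
    subst hcj1 hUj hUj1
    field_simp
    ring
  refine ⟨key, ?_⟩
  -- The prefactor is positive, so the sign of `Uj1 - Uj` is that of the affine function of `πk`.
  have hK : 0 < cj * πe * b / (νj2 * νj1) := by positivity
  rw [le_div_iff₀ hden, ← sub_nonpos, key, mul_nonpos_iff_pos_imp_nonpos.trans
    ⟨fun h => h.1 hK, fun h => ⟨fun _ => h, fun _ => hK.le⟩⟩, sub_nonpos]
end

section
/- Suppose the true marginal utility satisfies π^e < π ≤ π_max, the reward price satisfies π^r ≥ π_max − π^e, the penalty price satisfies π^p ≥ π^e, and the selection probability satisfies 0 ≤ α ≤ π^e/(π^r + π^e). Then: (a) the truthful report f = b minimizes the expected first-stage cost J(f) = α·(inf over q ∈ [0,∞) of J_s(q, f)) + (1 − α)·(inf over q ∈ [0,∞) of J_ns(q, f)) over f ≥ 0; (b) given the report f = b, q = 0 minimizes the selected cost J_s(q, b) over q ∈ [0,∞); (c) given the report f = b, q = b is the unique minimizer of the not-selected cost J_ns(q, b) over q ∈ [0,∞); and (d) the penalty charged at the optimum is zero, i.e.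 π^p·(b − q)^+ = 0 at q = b. -/
lemma agentUtility_eq_mul_min (b π q : ℝ) : agentUtility b π q = π * min q b := by
  unfold agentUtility
  split_ifs with h
  · rw [min_eq_left h.le]
  · rw [min_eq_right (not_lt.mp h)]

lemma neg_mul_max_le_Jsel {b π πe πr f q : ℝ} (hb : 0 ≤ b) (hπe : 0 ≤ πe) (hπr : 0 ≤ πr)
    (h : π - πe ≤ πr) (hq : 0 ≤ q) : -πr * max f b ≤ Jsel b π πe πr f q := by
  rw [Jsel, agentUtility_eq_mul_min]
  have ht : 0 ≤ min q b := le_min hq hb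
  have htq : min q b ≤ q := min_le_left q b
  have hred : max (f - q) 0 ≤ max f b - min q b :=
    max_le (by linarith [le_max_left f b]) (by linarith [min_le_right q b, le_max_right f b])
  nlinarith [mul_le_mul_of_nonneg_left hred hπr, mul_le_mul_of_nonneg_left htq hπe,
    mul_nonneg (sub_nonneg.mpr h) ht]

lemma sub_le_Jns {b π πe πp f q : ℝ} (hπe : 0 ≤ πe) (hπ : πe ≤ π) (hπp : πe ≤ πp) :
    πe * max f b - π * b ≤ Jns b π πe πp f q := by
  rw [Jns, agentUtility_eq_mul_min]
  have htb : min q b ≤ b := min_le_right q b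
  -- The shortfall of `q` below `max f b` is covered either by the penalty or by lost utility.
  have hshort : max f b ≤ q + max (f - q) 0 + (b - min q b) := by
    refine max_le ?_ ?_
    · linarith [le_max_left (f - q) 0]
    · linarith [le_max_right (f - q) 0, min_le_left q b]
  nlinarith [mul_le_mul_of_nonneg_left hshort hπe,
    mul_le_mul_of_nonneg_right hπp (le_max_right (f - q) 0),
    mul_le_mul_of_nonneg_right hπ (sub_nonneg.mpr htb)]

lemma Jsel_self_zero {b : ℝ} (π πe πr : ℝ) (hb : 0 ≤ b) : Jsel b π πe πr b 0 = -πr * b := by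
  simp [Jsel, agentUtility_eq_mul_min, hb]

lemma Jns_self_self (b π πe πp : ℝ) : Jns b π πe πp b b = πe * b - π * b := by
  simp [Jns, agentUtility_eq_mul_min]

/-- Consuming exactly the truthful report is strictly optimal when not selected: below `b` net
utility is lost, above `b` extra energy is paid for without any utility. -/
lemma Jns_self_lt {b π πe πp q : ℝ} (hπe : 0 < πe) (hπ : πe < π) (hπp : πe ≤ πp) (hq : q ≠ b) :
    Jns b π πe πp b b < Jns b π πe πp b q := by
  rw [Jns_self_self, Jns, agentUtility_eq_mul_min]
  rcases hq.lt_or_gt with h | h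
  · rw [min_eq_left h.le]
    nlinarith [mul_nonneg (hπe.le.trans hπp) (le_max_right (b - q) 0),
      mul_pos (sub_pos.mpr hπ) (sub_pos.mpr h)]
  · rw [min_eq_right h.le, max_eq_right (by linarith)]
    nlinarith

/-- Under the baseline-only reporting mechanism, suppose `πᵉ < π ≤ π_max`, the reward price
satisfies `πʳ ≥ π_max − πᵉ`, the penalty price satisfies `πᵖ ≥ πᵉ`, and the selection
probability satisfies `0 ≤ α ≤ πᵉ/(πʳ + πᵉ)`. Then: (a) the truthful report `f = b`
minimizes the expected first-stage cost `J` over `f ≥ 0`; (b) given the report `f = b`,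
`q = 0` minimizes the selected cost over `q ∈ [0, ∞)`; (c) given the report `f = b`,
`q = b` is the unique minimizer of the not-selected cost over `q ∈ [0, ∞)`; and (d) the
penalty charged at the optimum `q = b` is zero. -/
theorem stmt16 (b π πe πp πr πmax α : ℝ) (hb : 0 < b) (hπe : 0 < πe) (hπ : πe < π)
    (hπmax : π ≤ πmax) (hπr : πmax - πe ≤ πr) (hπp : πe ≤ πp)
    (hα0 : 0 ≤ α) (hα : α ≤ πe / (πr + πe)) :
    (∀ f : ℝ, 0 ≤ f → Jexp b π πe πp πr α b ≤ Jexp b π πe πp πr α f) ∧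
    (∀ q : ℝ, 0 ≤ q → Jsel b π πe πr b 0 ≤ Jsel b π πe πr b q) ∧
    (∀ q : ℝ, 0 ≤ q → Jns b π πe πp b b ≤ Jns b π πe πp b q ∧
        (q ≠ b → Jns b π πe πp b b < Jns b π πe πp b q)) ∧
    πp * max (b - b) 0 = 0 := by
  have hr : 0 < πr := by linarith
  have hpos : 0 < πr + πe := by linarith
  have hslope : α * (πr + πe) ≤ πe := (le_div_iff₀ hpos).mp hα
  have hα1 : 0 ≤ 1 - α := sub_nonneg.mpr (hα.trans ((div_le_one hpos).mpr (by linarith)))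
  have hs : ∀ f q : ℝ, 0 ≤ q → -πr * max f b ≤ Jsel b π πe πr f q := fun f q hq =>
    neg_mul_max_le_Jsel hb.le hπe.le hr.le (by linarith) hq
  have hn : ∀ f q : ℝ, πe * max f b - π * b ≤ Jns b π πe πp f q := fun f q =>
    sub_le_Jns hπe.le hπ.le hπp
  refine ⟨fun f _ => ?_, fun q hq => ?_, fun q _ => ⟨?_, Jns_self_lt hπe hπ hπp⟩, by simp⟩
  · have hne (g : ℝ → ℝ) : (g '' Set.Ici 0).Nonempty := Set.nonempty_Ici.image g
    have hsb : sInf ((fun q => Jsel b π πe πr b q) '' Set.Ici 0) ≤ -πr * b :=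
      csInf_le ⟨-πr * max b b, Set.forall_mem_image.mpr fun q hq => hs b q hq⟩
        ⟨0, Set.mem_Ici.mpr le_rfl, Jsel_self_zero π πe πr hb.le⟩
    have hnb : sInf ((fun q => Jns b π πe πp b q) '' Set.Ici 0) ≤ πe * b - π * b :=
      csInf_le ⟨πe * max b b - π * b, Set.forall_mem_image.mpr fun q _ => hn b q⟩
        ⟨b, hb.le, Jns_self_self b π πe πp⟩
    have hsf : -πr * max f b ≤ sInf ((fun q => Jsel b π πe πr f q) '' Set.Ici 0) :=
      le_csInf (hne _) (Set.forall_mem_image.mpr fun q hq => hs f q hq)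
    have hnf : πe * max f b - π * b ≤ sInf ((fun q => Jns b π πe πp f q) '' Set.Ici 0) :=
      le_csInf (hne _) (Set.forall_mem_image.mpr fun q _ => hn f q)
    calc Jexp b π πe πp πr α b
        ≤ α * (-πr * b) + (1 - α) * (πe * b - π * b) := by unfold Jexp; gcongr
      _ ≤ α * (-πr * max f b) + (1 - α) * (πe * max f b - π * b) := by
          linarith [mul_nonneg (sub_nonneg.mpr hslope) (sub_nonneg.mpr (le_max_right f b))]
      _ ≤ Jexp b π πe πp πr α f := by unfold Jexp; gcongr
  · simpa [Jsel_self_zero π πe πr hb.le] using hs b q hq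
  · simpa [Jns_self_self] using hn b q
end
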